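/- Let n ∈ ℕ with n ≥ 2, let p ∈ (0,2], and let r ∈ ℝ with r² ≤ (p+n-2)/n. Then for all x ∈ ℝⁿ and all a ∈ ℝ, (∫_{S^{n-1}} |x + a r y|² dσ(y))^{1/2} ≤ (∫_{S^{n-1}} |x + a y|^p dσ(y))^{1/p}. -/

import Mathlib

open MeasureTheory Metric

/-- The normalized rotation-invariant (Haar) probability measure `σ` on the unit
sphere `S^{n-1} ⊆ ℝⁿ`. -/
noncomputable def sphereHaar (n : ℕ) :
    Measure (sphere (0 : EuclideanSpace ℝ (Fin n)) 1) :=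
  ((volume : Measure (EuclideanSpace ℝ (Fin n))).toSphere Set.univ)⁻¹ •
    (volume : Measure (EuclideanSpace ℝ (Fin n))).toSphere

open scoped RealInnerProductSpace Pointwise

instance isFiniteMeasure_sphereHaar (n : ℕ) : IsFiniteMeasure (sphereHaar n) := by
  unfold sphereHaar
  by_cases h : (volume : Measure (EuclideanSpace ℝ (Fin n))).toSphere Set.univ = 0
  · rw [Measure.measure_univ_eq_zero.1 h, smul_zero]
    infer_instance
  · exact Measure.smul_finite _ (ENNReal.inv_ne_top.2 h)

lemma isProbabilityMeasure_sphereHaar {n : ℕ} (hn : n ≠ 0) :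
    IsProbabilityMeasure (sphereHaar n) := by
  refine ⟨?_⟩
  have : Nonempty (Fin n) := ⟨⟨0, Nat.pos_of_ne_zero hn⟩⟩
  rw [sphereHaar, Measure.smul_apply, smul_eq_mul]
  refine ENNReal.inv_mul_cancel ?_ (measure_ne_top _ _)
  rw [Ne, Measure.measure_univ_eq_zero]
  exact Measure.toSphere_ne_zero _

/-- The homeomorphism of the unit sphere induced by a linear isometry. -/
noncomputable def sphereCongr {n : ℕ}
    (R : EuclideanSpace ℝ (Fin n) ≃ₗᵢ[ℝ] EuclideanSpace ℝ (Fin n)) :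
    sphere (0 : EuclideanSpace ℝ (Fin n)) 1 ≃ₜ sphere (0 : EuclideanSpace ℝ (Fin n)) 1 :=
  R.toHomeomorph.subtype fun x ↦ by simp

@[simp]
lemma coe_sphereCongr {n : ℕ}
    (R : EuclideanSpace ℝ (Fin n) ≃ₗᵢ[ℝ] EuclideanSpace ℝ (Fin n))
    (y : sphere (0 : EuclideanSpace ℝ (Fin n)) 1) :
    (sphereCongr R y : EuclideanSpace ℝ (Fin n)) = R y := rfl

lemma measurePreserving_sphereCongr {n : ℕ}
    (R : EuclideanSpace ℝ (Fin n) ≃ₗᵢ[ℝ] EuclideanSpace ℝ (Fin n)) :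
    MeasurePreserving (sphereCongr R) (sphereHaar n) (sphereHaar n) := by
  refine MeasurePreserving.smul_measure ⟨(sphereCongr R).measurable, ?_⟩ _
  ext s hs
  rw [Measure.map_apply (sphereCongr R).measurable hs,
    Measure.toSphere_apply' _ ((sphereCongr R).measurable hs), Measure.toSphere_apply' _ hs,
    ← R.measurePreserving.measure_preimage_equiv (f := R.toMeasurableEquiv)
      (Set.Ioo (0 : ℝ) 1 • (Subtype.val '' s))]
  congr 2
  ext z
  simp only [Set.mem_smul, Set.mem_image, Set.mem_preimage, Subtype.exists]
  constructor
  · rintro ⟨c, hc, _, ⟨y, hy, hys, rfl⟩, rfl⟩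
    exact ⟨c, hc, R y, ⟨R y, by simpa using hy, hys, rfl⟩, by simp⟩
  · rintro ⟨c, hc, _, ⟨y, hy, hys, rfl⟩, h⟩
    refine ⟨c, hc, R.symm y, ⟨R.symm y, by simpa using hy, ?_, rfl⟩, ?_⟩
    · convert hys
      ext1
      simp
    · apply R.injective
      simpa using h

lemma integral_sphereHaar_comp_isometry {n : ℕ}
    (R : EuclideanSpace ℝ (Fin n) ≃ₗᵢ[ℝ] EuclideanSpace ℝ (Fin n))
    (f : EuclideanSpace ℝ (Fin n) → ℝ) :
    ∫ y : sphere (0 : EuclideanSpace ℝ (Fin n)) 1, f (R y) ∂(sphereHaar n) =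
      ∫ y : sphere (0 : EuclideanSpace ℝ (Fin n)) 1, f y ∂(sphereHaar n) :=
  (measurePreserving_sphereCongr R).integral_comp (sphereCongr R).measurableEmbedding
    (fun y ↦ f y)

lemma integral_sphereHaar_reflection {n : ℕ} {u v : EuclideanSpace ℝ (Fin n)}
    (hu : ‖u‖ = 1) (hv : ‖v‖ = 1) (huv : ⟪u, v⟫ = 0) (f : ℝ → ℝ → ℝ) (α : ℝ) :
    ∫ y : sphere (0 : EuclideanSpace ℝ (Fin n)) 1,
      f (Real.cos α * ⟪u, y⟫ + Real.sin α * ⟪v, y⟫) (Real.sin α * ⟪u, y⟫ - Real.cos α * ⟪v, y⟫)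
        ∂(sphereHaar n) =
      ∫ y : sphere (0 : EuclideanSpace ℝ (Fin n)) 1, f ⟪u, y⟫ ⟪v, y⟫ ∂(sphereHaar n) := by
  set w := Real.cos (α / 2) • u + Real.sin (α / 2) • v with hw
  have hvu : ⟪v, u⟫ = 0 := by rw [real_inner_comm, huv]
  have huu : ⟪u, u⟫ = 1 := by rw [real_inner_self_eq_norm_sq, hu, one_pow]
  have hvv : ⟪v, v⟫ = 1 := by rw [real_inner_self_eq_norm_sq, hv, one_pow]
  have hw1 : ‖w‖ ^ 2 = 1 := by
    rw [← real_inner_self_eq_norm_sq, hw]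
    simp only [inner_add_left, inner_add_right, real_inner_smul_left, real_inner_smul_right,
      huu, hvv, huv, hvu]
    linear_combination Real.cos_sq_add_sin_sq (α / 2)
  have hα : α = 2 * (α / 2) := by ring
  rw [← integral_sphereHaar_comp_isometry (Submodule.reflection (ℝ ∙ w))
    (fun y ↦ f ⟪u, y⟫ ⟪v, y⟫)]
  congr 1 with y
  have hs := Real.cos_sq_add_sin_sq (α / 2)
  simp only [Submodule.reflection_singleton_apply, RCLike.ofReal_real_eq_id, id, hw1, div_one]
  congr 1
  · rw [hα, Real.cos_two_mul, Real.sin_two_mul]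
    simp only [hw, inner_add_left, inner_sub_right, inner_add_right, real_inner_smul_left,
      real_inner_smul_right, huu, huv, two_smul]
    ring
  · rw [hα, Real.cos_two_mul', Real.sin_two_mul]
    simp only [hw, inner_add_left, inner_sub_right, inner_add_right, real_inner_smul_left,
      real_inner_smul_right, hvv, hvu, two_smul]
    linear_combination (- ⟪v, (y : EuclideanSpace ℝ (Fin n))⟫) * hs

lemma hasDerivAt_integral_of_continuousOn {S : Type*} [TopologicalSpace S] [CompactSpace S]
    [SecondCountableTopology S]
    [MeasurableSpace S] [BorelSpace S] {μ : Measure S} [IsFiniteMeasure μ] {F F' : ℝ → S → ℝ}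
    {U : Set ℝ} (hU : IsOpen U) (hF : ∀ x ∈ U, Continuous (F x))
    (hF' : ContinuousOn (Function.uncurry F') (U ×ˢ Set.univ))
    (hd : ∀ x ∈ U, ∀ y, HasDerivAt (F · y) (F' x y) x) {x₀ : ℝ} (hx₀ : x₀ ∈ U) :
    HasDerivAt (fun x ↦ ∫ y, F x y ∂μ) (∫ y, F' x₀ y ∂μ) x₀ := by
  obtain ⟨ε, hε, hεU⟩ := Metric.nhds_basis_closedBall.mem_iff.1 (hU.mem_nhds hx₀)
  obtain ⟨C, hC⟩ := ((isCompact_closedBall x₀ ε).prod isCompact_univ).exists_bound_of_continuousOn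
    (hF'.mono (Set.prod_mono_left hεU))
  have hF'c : Continuous (F' x₀) := by
    rw [← continuousOn_univ]
    exact hF'.comp (f := fun y ↦ (x₀, y)) (by fun_prop) fun y _ ↦ ⟨hx₀, Set.mem_univ _⟩
  refine (hasDerivAt_integral_of_dominated_loc_of_deriv_le (bound := fun _ ↦ C)
    (Metric.closedBall_mem_nhds x₀ hε) ?_ ?_ hF'c.aestronglyMeasurable ?_ (integrable_const C)
    ?_).2
  · filter_upwards [hU.mem_nhds hx₀] with x hx using (hF x hx).aestronglyMeasurable
  · exact (hF x₀ hx₀).integrable_of_hasCompactSupport (HasCompactSupport.of_compactSpace _)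
  · exact .of_forall fun y x hx ↦ hC (x, y) ⟨hx, Set.mem_univ _⟩
  · exact .of_forall fun y x hx ↦ hd x (hεU hx) y

lemma cos_mul_inner_add_sin_mul_inner_mem_Icc {n : ℕ} {u v : EuclideanSpace ℝ (Fin n)}
    (hu : ‖u‖ = 1) (hv : ‖v‖ = 1) (huv : ⟪u, v⟫ = 0) (α : ℝ)
    (y : sphere (0 : EuclideanSpace ℝ (Fin n)) 1) :
    Real.cos α * ⟪u, y⟫ + Real.sin α * ⟪v, y⟫ ∈ Set.Icc (-1 : ℝ) 1 := by
  have hw : ‖Real.cos α • u + Real.sin α • v‖ = 1 := by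
    rw [← sq_eq_sq₀ (norm_nonneg _) zero_le_one, norm_add_sq_real, norm_smul, norm_smul,
      real_inner_smul_left, real_inner_smul_right, huv, hu, hv]
    simp
  have hy : ‖(y : EuclideanSpace ℝ (Fin n))‖ = 1 := by simp
  have := abs_real_inner_le_norm (Real.cos α • u + Real.sin α • v) (y : EuclideanSpace ℝ (Fin n))
  rw [hw, hy, inner_add_left, real_inner_smul_left, real_inner_smul_left, one_mul] at this
  exact abs_le.1 this

lemma inner_sphere_mem_Icc {n : ℕ} {u : EuclideanSpace ℝ (Fin n)} (hu : ‖u‖ = 1)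
    (y : sphere (0 : EuclideanSpace ℝ (Fin n)) 1) : ⟪u, y⟫ ∈ Set.Icc (-1 : ℝ) 1 := by
  have := abs_real_inner_le_norm u (y : EuclideanSpace ℝ (Fin n))
  rw [hu, norm_eq_of_mem_sphere y, one_mul] at this
  exact abs_le.1 this

lemma integrable_sphereHaar {n : ℕ} {f : sphere (0 : EuclideanSpace ℝ (Fin n)) 1 → ℝ}
    (hf : Continuous f) : Integrable f (sphereHaar n) :=
  hf.integrable_of_hasCompactSupport (HasCompactSupport.of_compactSpace _)

lemma continuous_comp_inner_sphere {n : ℕ} {u : EuclideanSpace ℝ (Fin n)} (hu : ‖u‖ = 1)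
    {f : ℝ → ℝ} (hf : ContinuousOn f (Set.Icc (-1) 1)) :
    Continuous fun y : sphere (0 : EuclideanSpace ℝ (Fin n)) 1 ↦ f ⟪u, y⟫ :=
  hf.comp_continuous (by fun_prop) (inner_sphere_mem_Icc hu)

lemma integral_inner_sq_mul_deriv {n : ℕ} {u v : EuclideanSpace ℝ (Fin n)}
    (hu : ‖u‖ = 1) (hv : ‖v‖ = 1) (huv : ⟪u, v⟫ = 0) {f f' : ℝ → ℝ}
    (hf : ∀ t ∈ Set.Icc (-1 : ℝ) 1, HasDerivAt f (f' t) t)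
    (hf' : ContinuousOn f' (Set.Icc (-1) 1)) :
    ∫ y : sphere (0 : EuclideanSpace ℝ (Fin n)) 1, ⟪v, y⟫ ^ 2 * f' ⟪u, y⟫ ∂(sphereHaar n) =
      ∫ y : sphere (0 : EuclideanSpace ℝ (Fin n)) 1, ⟪u, y⟫ * f ⟪u, y⟫ ∂(sphereHaar n) := by
  have hfc : ContinuousOn f (Set.Icc (-1) 1) :=
    fun t ht ↦ (hf t ht).continuousAt.continuousWithinAt
  have hmem := cos_mul_inner_add_sin_mul_inner_mem_Icc hu hv huv
  have hd := hasDerivAt_integral_of_continuousOn (μ := sphereHaar n) (U := Set.univ)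
    (F := fun α y ↦ (Real.sin α * ⟪u, (y : EuclideanSpace ℝ (Fin n))⟫ - Real.cos α * ⟪v, y⟫) *
      f (Real.cos α * ⟪u, y⟫ + Real.sin α * ⟪v, y⟫))
    (F' := fun α y ↦ (Real.cos α * ⟪u, (y : EuclideanSpace ℝ (Fin n))⟫ + Real.sin α * ⟪v, y⟫) *
        f (Real.cos α * ⟪u, y⟫ + Real.sin α * ⟪v, y⟫) +
      (Real.sin α * ⟪u, (y : EuclideanSpace ℝ (Fin n))⟫ - Real.cos α * ⟪v, y⟫) *
        (f' (Real.cos α * ⟪u, y⟫ + Real.sin α * ⟪v, y⟫) *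
          (-Real.sin α * ⟪u, y⟫ + Real.cos α * ⟪v, y⟫)))
    (x₀ := 0) isOpen_univ ?_ ?_ ?_ (Set.mem_univ _)
  · have hc : (fun α : ℝ ↦ ∫ y : sphere (0 : EuclideanSpace ℝ (Fin n)) 1,
        (Real.sin α * ⟪u, (y : EuclideanSpace ℝ (Fin n))⟫ - Real.cos α * ⟪v, y⟫) *
        f (Real.cos α * ⟪u, y⟫ + Real.sin α * ⟪v, y⟫) ∂(sphereHaar n)) =
        fun _ ↦ ∫ y : sphere (0 : EuclideanSpace ℝ (Fin n)) 1, ⟪v, y⟫ * f ⟪u, y⟫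
          ∂(sphereHaar n) := by
      ext α
      exact integral_sphereHaar_reflection hu hv huv (fun t τ ↦ τ * f t) α
    rw [hc] at hd
    have h0 := hd.unique (hasDerivAt_const _ _)
    simp only [Real.cos_zero, Real.sin_zero, one_mul, zero_mul, add_zero, zero_sub, neg_zero,
      zero_add] at h0
    have h1 : Continuous fun y : sphere (0 : EuclideanSpace ℝ (Fin n)) 1 ↦ f ⟪u, y⟫ :=
      continuous_comp_inner_sphere hu hfc
    have h2 : Continuous fun y : sphere (0 : EuclideanSpace ℝ (Fin n)) 1 ↦ f' ⟪u, y⟫ :=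
      continuous_comp_inner_sphere hu hf'
    rw [integral_add] at h0
    rotate_left
    · exact integrable_sphereHaar (.mul (by fun_prop) h1)
    · exact integrable_sphereHaar (.mul (by fun_prop) (.mul h2 (by fun_prop)))
    rw [eq_comm, ← sub_eq_zero, ← h0, sub_eq_add_neg, ← integral_neg]
    congr 2
    ext y
    ring
  · intro α _
    have h1 : Continuous fun y : sphere (0 : EuclideanSpace ℝ (Fin n)) 1 ↦
        f (Real.cos α * ⟪u, y⟫ + Real.sin α * ⟪v, y⟫) :=
      hfc.comp_continuous (by fun_prop) (hmem α)
    exact .mul (by fun_prop) h1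
  · have h1 : Continuous fun z : ℝ × sphere (0 : EuclideanSpace ℝ (Fin n)) 1 ↦
        f (Real.cos z.1 * ⟪u, z.2⟫ + Real.sin z.1 * ⟪v, z.2⟫) :=
      hfc.comp_continuous (by fun_prop) fun z ↦ hmem z.1 z.2
    have h2 : Continuous fun z : ℝ × sphere (0 : EuclideanSpace ℝ (Fin n)) 1 ↦
        f' (Real.cos z.1 * ⟪u, z.2⟫ + Real.sin z.1 * ⟪v, z.2⟫) :=
      hf'.comp_continuous (by fun_prop) fun z ↦ hmem z.1 z.2
    apply Continuous.continuousOn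
    exact .add (.mul (by fun_prop) h1) (.mul (by fun_prop) (.mul h2 (by fun_prop)))
  · intro α _ y
    have h1 : HasDerivAt (fun α ↦ Real.cos α * ⟪u, (y : EuclideanSpace ℝ (Fin n))⟫
        + Real.sin α * ⟪v, y⟫) (-Real.sin α * ⟪u, y⟫ + Real.cos α * ⟪v, y⟫) α :=
      ((Real.hasDerivAt_cos α).mul_const _).add ((Real.hasDerivAt_sin α).mul_const _)
    have h2 : HasDerivAt (fun α ↦ Real.sin α * ⟪u, (y : EuclideanSpace ℝ (Fin n))⟫
        - Real.cos α * ⟪v, y⟫) (Real.cos α * ⟪u, y⟫ + Real.sin α * ⟪v, y⟫) α := by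
      refine (((Real.hasDerivAt_sin α).mul_const ⟪u, (y : EuclideanSpace ℝ (Fin n))⟫).sub
        ((Real.hasDerivAt_cos α).mul_const ⟪v, (y : EuclideanSpace ℝ (Fin n))⟫)).congr_deriv ?_
      rw [neg_mul, sub_neg_eq_add]
    exact h2.mul ((hf _ (hmem α y)).comp α h1)

/-- Integration by parts on the sphere for functions of one coordinate. -/
lemma integral_one_sub_inner_sq_mul_deriv {n : ℕ} {u : EuclideanSpace ℝ (Fin n)}
    (hu : ‖u‖ = 1) {f f' : ℝ → ℝ}
    (hf : ∀ t ∈ Set.Icc (-1 : ℝ) 1, HasDerivAt f (f' t) t)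
    (hf' : ContinuousOn f' (Set.Icc (-1) 1)) :
    ∫ y : sphere (0 : EuclideanSpace ℝ (Fin n)) 1,
        (1 - ⟪u, y⟫ ^ 2) * f' ⟪u, y⟫ ∂(sphereHaar n) =
      (n - 1) *
        ∫ y : sphere (0 : EuclideanSpace ℝ (Fin n)) 1, ⟪u, y⟫ * f ⟪u, y⟫ ∂(sphereHaar n) := by
  have hn : 0 < n := by
    rcases Nat.eq_zero_or_pos n with rfl | h
    · simp [Subsingleton.elim u 0] at hu
    · exact h
  obtain ⟨b, hb⟩ := Orthonormal.exists_orthonormalBasis_extension_of_card_eq (𝕜 := ℝ)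
    (E := EuclideanSpace ℝ (Fin n)) (ι := Fin n) (by simp) (v := fun _ ↦ u) (s := {⟨0, hn⟩})
    (by
      refine ⟨fun _ ↦ hu, fun i j hij ↦ (hij (Subsingleton.elim _ _)).elim⟩)
  replace hb : b ⟨0, hn⟩ = u := hb _ rfl
  have hfc' : Continuous fun y : sphere (0 : EuclideanSpace ℝ (Fin n)) 1 ↦ f' ⟪u, y⟫ :=
    continuous_comp_inner_sphere hu hf'
  have hsum : ∀ y : sphere (0 : EuclideanSpace ℝ (Fin n)) 1,
      (1 - ⟪u, y⟫ ^ 2) * f' ⟪u, y⟫ =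
        ∑ i ∈ Finset.univ.erase (⟨0, hn⟩ : Fin n), ⟪b i, y⟫ ^ 2 * f' ⟪u, y⟫ := by
    intro y
    have := b.sum_sq_inner_right (y : EuclideanSpace ℝ (Fin n))
    rw [norm_eq_of_mem_sphere y, ← Finset.add_sum_erase _ _ (Finset.mem_univ (⟨0, hn⟩ : Fin n)),
      hb] at this
    rw [← Finset.sum_mul]
    congr 1
    linarith
  simp_rw [hsum]
  rw [integral_finsetSum]
  swap
  · exact fun i _ ↦ integrable_sphereHaar (.mul (by fun_prop) hfc')
  rw [Finset.sum_congr rfl fun i hi ↦ integral_inner_sq_mul_deriv hu (b.norm_eq_one i) ?_ hf hf']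
  · simp [Nat.cast_sub (show 1 ≤ n from hn)]
  · rw [← hb]
    exact b.orthonormal.2 (Finset.ne_of_mem_erase hi).symm

lemma one_add_two_mul_add_sq_pos {s t : ℝ} (hs : s ∈ Set.Ioo (-1 : ℝ) 1)
    (ht : t ∈ Set.Icc (-1 : ℝ) 1) : 0 < 1 + 2 * s * t + s ^ 2 := by
  have h1 : 0 < 1 + s := by linarith [hs.1]
  have h2 : 0 < 1 - s := by linarith [hs.2]
  rcases le_total 0 t with h | h
  · nlinarith [mul_pos h1 h1, mul_nonneg (sub_nonneg.2 ht.2) (mul_pos h2 h2).le,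
      mul_nonneg h (mul_pos h1 h1).le]
  · nlinarith [mul_pos h2 h2, mul_nonneg (neg_le_iff_add_nonneg.1 ht.1) (mul_pos h1 h1).le,
      mul_nonneg (neg_nonneg.2 h) (mul_pos h2 h2).le]

section SphericalMean

variable {n : ℕ} {u : EuclideanSpace ℝ (Fin n)}

lemma one_add_two_mul_inner_add_sq_pos (hu : ‖u‖ = 1) {s : ℝ} (hs : s ∈ Set.Ioo (-1 : ℝ) 1)
    (y : sphere (0 : EuclideanSpace ℝ (Fin n)) 1) : 0 < 1 + 2 * s * ⟪u, y⟫ + s ^ 2 :=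
  one_add_two_mul_add_sq_pos hs (inner_sphere_mem_Icc hu y)

lemma continuous_rpow_inner_sphere (hu : ‖u‖ = 1) {s : ℝ} (hs : s ∈ Set.Ioo (-1 : ℝ) 1) (q : ℝ) :
    Continuous fun y : sphere (0 : EuclideanSpace ℝ (Fin n)) 1 ↦
      (1 + 2 * s * ⟪u, y⟫ + s ^ 2) ^ q :=
  Continuous.rpow_const (by fun_prop)
    fun y ↦ .inl (one_add_two_mul_inner_add_sq_pos hu hs y).ne'

lemma continuousOn_rpow_inner_sphere (hu : ‖u‖ = 1) (q : ℝ) :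
    ContinuousOn (fun z : ℝ × sphere (0 : EuclideanSpace ℝ (Fin n)) 1 ↦
      (1 + 2 * z.1 * ⟪u, z.2⟫ + z.1 ^ 2) ^ q) (Set.Ioo (-1) 1 ×ˢ Set.univ) :=
  ContinuousOn.rpow_const (by fun_prop)
    fun z hz ↦ .inl (one_add_two_mul_inner_add_sq_pos hu hz.1 z.2).ne'

variable (u) in
/-- The mean over the unit sphere of `y ↦ ‖u + s y‖ ^ (2 q)`, for a unit vector `u`. -/
noncomputable def sphericalMean (q s : ℝ) : ℝ :=
  ∫ y : sphere (0 : EuclideanSpace ℝ (Fin n)) 1,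
    (1 + 2 * s * ⟪u, y⟫ + s ^ 2) ^ q ∂(sphereHaar n)

variable (u) in
/-- The mean over the unit sphere of `y ↦ ⟪u, y⟫ * ‖u + s y‖ ^ (2 q)`, for a unit vector `u`. -/
noncomputable def sphericalMoment (q s : ℝ) : ℝ :=
  ∫ y : sphere (0 : EuclideanSpace ℝ (Fin n)) 1,
    ⟪u, y⟫ * (1 + 2 * s * ⟪u, y⟫ + s ^ 2) ^ q ∂(sphereHaar n)

lemma sphericalMoment_add_mul_sphericalMean (hu : ‖u‖ = 1) {s : ℝ} (hs : s ∈ Set.Ioo (-1 : ℝ) 1)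
    (q a b : ℝ) :
    a * sphericalMoment u q s + b * sphericalMean u q s =
      ∫ y : sphere (0 : EuclideanSpace ℝ (Fin n)) 1,
        (a * ⟪u, y⟫ + b) * (1 + 2 * s * ⟪u, y⟫ + s ^ 2) ^ q ∂(sphereHaar n) := by
  have hc := continuous_rpow_inner_sphere hu hs q
  rw [sphericalMean, sphericalMoment, ← integral_const_mul, ← integral_const_mul, ← integral_add]
  · congr 1 with y
    ring
  · exact integrable_sphereHaar (.mul (by fun_prop) (.mul (by fun_prop) hc))
  · exact integrable_sphereHaar (.mul (by fun_prop) hc)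

lemma sphericalMean_eq (hu : ‖u‖ = 1) {s : ℝ} (hs : s ∈ Set.Ioo (-1 : ℝ) 1) (q : ℝ) :
    sphericalMean u q s =
      2 * s * sphericalMoment u (q - 1) s + (1 + s ^ 2) * sphericalMean u (q - 1) s := by
  rw [sphericalMoment_add_mul_sphericalMean hu hs, sphericalMean]
  congr 1 with y
  have hX := one_add_two_mul_inner_add_sq_pos hu hs y
  rw [Real.rpow_sub_one hX.ne']
  field_simp
  ring

lemma hasDerivAt_rpow_inner_sphere (hu : ‖u‖ = 1) {s : ℝ} (hs : s ∈ Set.Ioo (-1 : ℝ) 1) (q : ℝ)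
    (y : sphere (0 : EuclideanSpace ℝ (Fin n)) 1) :
    HasDerivAt (fun s ↦ (1 + 2 * s * ⟪u, (y : EuclideanSpace ℝ (Fin n))⟫ + s ^ 2) ^ q)
      (q * ((2 * ⟪u, y⟫ + 2 * s) * (1 + 2 * s * ⟪u, y⟫ + s ^ 2) ^ (q - 1))) s := by
  have h := (((((hasDerivAt_id s).const_mul 2).mul_const
    ⟪u, (y : EuclideanSpace ℝ (Fin n))⟫).const_add 1).add (hasDerivAt_pow 2 s)).rpow_const (p := q)
      (.inl (one_add_two_mul_inner_add_sq_pos hu hs y).ne')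
  refine h.congr_deriv ?_
  simp
  ring

lemma hasDerivAt_sphericalMean (hu : ‖u‖ = 1) {s : ℝ} (hs : s ∈ Set.Ioo (-1 : ℝ) 1) (q : ℝ) :
    HasDerivAt (sphericalMean u q)
      (2 * q * (sphericalMoment u (q - 1) s + s * sphericalMean u (q - 1) s)) s := by
  refine (hasDerivAt_integral_of_continuousOn isOpen_Ioo
    (fun s hs ↦ continuous_rpow_inner_sphere hu hs q) ?_
    (fun s hs y ↦ hasDerivAt_rpow_inner_sphere hu hs q y) hs).congr_deriv ?_
  · exact continuousOn_const.mul (.mul (by fun_prop) (continuousOn_rpow_inner_sphere hu (q - 1)))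
  · rw [integral_const_mul, ← sphericalMoment_add_mul_sphericalMean hu hs]
    ring

lemma exists_hasDerivAt_sphericalMoment_add (hu : ‖u‖ = 1) {s : ℝ}
    (hs : s ∈ Set.Ioo (-1 : ℝ) 1) (q : ℝ) :
    ∃ D, HasDerivAt (fun s ↦ sphericalMoment u (q - 1) s + s * sphericalMean u (q - 1) s) D s ∧
      s * D = (2 * q - 1) * s * sphericalMean u (q - 1) s -
        (n - 1) * sphericalMoment u (q - 1) s := by
  have hd := hasDerivAt_integral_of_continuousOn (μ := sphereHaar n) (U := Set.Ioo (-1 : ℝ) 1)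
    (F := fun s y ↦ (1 * ⟪u, (y : EuclideanSpace ℝ (Fin n))⟫ + s) *
      (1 + 2 * s * ⟪u, y⟫ + s ^ 2) ^ (q - 1))
    (F' := fun s y ↦ 1 * (1 + 2 * s * ⟪u, (y : EuclideanSpace ℝ (Fin n))⟫ + s ^ 2) ^ (q - 1) +
      (1 * ⟪u, (y : EuclideanSpace ℝ (Fin n))⟫ + s) * ((q - 1) * ((2 * ⟪u, y⟫ + 2 * s) *
        (1 + 2 * s * ⟪u, y⟫ + s ^ 2) ^ (q - 1 - 1))))
    isOpen_Ioo (fun s hs ↦ .mul (by fun_prop) (continuous_rpow_inner_sphere hu hs _)) ?_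
    (fun s hs y ↦ ((hasDerivAt_id s).const_add _).mul
      (hasDerivAt_rpow_inner_sphere hu hs (q - 1) y)) hs
  · refine ⟨_, hd.congr_of_eventuallyEq ?_, ?_⟩
    · filter_upwards [isOpen_Ioo.mem_nhds hs] with x hx
      rw [← sphericalMoment_add_mul_sphericalMean hu hx, one_mul]
    · have hX : ∀ t ∈ Set.Icc (-1 : ℝ) 1, 1 + 2 * s * t + s ^ 2 ≠ 0 :=
        fun t ht ↦ (one_add_two_mul_add_sq_pos hs ht).ne'
      have hparts := integral_one_sub_inner_sq_mul_deriv hu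
        (f := fun t ↦ (1 + 2 * s * t + s ^ 2) ^ (q - 1))
        (f' := fun t ↦ 2 * s * (q - 1) * (1 + 2 * s * t + s ^ 2) ^ (q - 1 - 1)) ?_ ?_
      · rw [sphericalMoment, ← hparts, sphericalMean, ← integral_const_mul, ← integral_const_mul,
          ← integral_sub]
        · congr 1 with y
          have hXy := hX _ (inner_sphere_mem_Icc hu y)
          have hE : (1 + 2 * s * ⟪u, (y : EuclideanSpace ℝ (Fin n))⟫ + s ^ 2) ^ (q - 1) =
              (1 + 2 * s * ⟪u, (y : EuclideanSpace ℝ (Fin n))⟫ + s ^ 2) ^ (q - 1 - 1) *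
                (1 + 2 * s * ⟪u, (y : EuclideanSpace ℝ (Fin n))⟫ + s ^ 2) := by
            rw [Real.rpow_sub_one hXy (q - 1), div_mul_cancel₀ _ hXy]
          rw [hE]
          ring
        · exact integrable_sphereHaar (continuous_const.mul (continuous_rpow_inner_sphere hu hs _))
        · exact integrable_sphereHaar
            (.mul (by fun_prop) (continuous_const.mul (continuous_rpow_inner_sphere hu hs _)))
      · intro t ht
        have h := ((((hasDerivAt_id t).const_mul (2 * s)).const_add 1).add_const
          (s ^ 2)).rpow_const (p := q - 1) (.inl (hX t ht))
        refine h.congr_deriv ?_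
        simp
      · exact continuousOn_const.mul (ContinuousOn.rpow_const (by fun_prop) fun t ht ↦ .inl (hX t ht))
  · exact .add (continuousOn_const.mul (continuousOn_rpow_inner_sphere hu _))
      (.mul (by fun_prop) (continuousOn_const.mul
        (.mul (by fun_prop) (continuousOn_rpow_inner_sphere hu _))))

lemma continuous_sphericalMean {q : ℝ} (hq : 0 ≤ q) : Continuous (sphericalMean u q) := by
  have h : Continuous (Function.uncurry
      fun (s : ℝ) (y : sphere (0 : EuclideanSpace ℝ (Fin n)) 1) ↦
        (1 + 2 * s * ⟪u, y⟫ + s ^ 2) ^ q) :=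
    Continuous.rpow_const (by fun_prop) fun _ ↦ .inr hq
  have := continuous_parametric_integral_of_continuous (μ := sphereHaar n) h isCompact_univ
  rwa [Measure.restrict_univ] at this

lemma sphericalMean_zero (hn : n ≠ 0) (q : ℝ) : sphericalMean u q 0 = 1 := by
  have := isProbabilityMeasure_sphereHaar hn
  simp [sphericalMean]

lemma sphericalMean_nonneg (hu : ‖u‖ = 1) {s : ℝ} (hs : s ∈ Set.Ioo (-1 : ℝ) 1) (q : ℝ) :
    0 ≤ sphericalMean u q s :=
  integral_nonneg fun y ↦ Real.rpow_nonneg (one_add_two_mul_inner_add_sq_pos hu hs y).le _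

end SphericalMean

lemma rpow_le_of_spherical_ode {n : ℕ} (hn : 2 ≤ n) {q ρ : ℝ} (hq : q ∈ Set.Ioc (0 : ℝ) 1)
    (hρ : n * ρ = 2 * q + n - 2) {G K T : ℝ → ℝ} (hG0 : G 0 = 1)
    (hGnn : ∀ s ∈ Set.Ioo (0 : ℝ) 1, 0 ≤ G s)
    (hG : ∀ s ∈ Set.Ico (0 : ℝ) 1, HasDerivAt G (2 * q * (T s + s * K s)) s)
    (hL : ∀ s ∈ Set.Ico (0 : ℝ) 1, ∃ D, HasDerivAt (fun s ↦ T s + s * K s) D s ∧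
      s * D = (2 * q - 1) * s * K s - (n - 1) * T s)
    (hGKT : ∀ s ∈ Set.Ioo (0 : ℝ) 1, G s = 2 * s * T s + (1 + s ^ 2) * K s)
    {s : ℝ} (hs : s ∈ Set.Ico (0 : ℝ) 1) : (1 + ρ * s ^ 2) ^ q ≤ G s := by
  have hn' : (2 : ℝ) ≤ n := by exact_mod_cast hn
  have hρ0 : 0 < ρ := by
    refine pos_of_mul_pos_right (a := (n : ℝ)) ?_ (by positivity)
    linarith [hq.1]
  have hv : ∀ s : ℝ, 0 < 1 + ρ * s ^ 2 := fun s ↦ by positivity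
  have hw : ∀ s ∈ Set.Ico (0 : ℝ) 1, 0 < 1 - s ^ 2 := fun s hs ↦ by nlinarith [hs.1, hs.2]
  set L : ℝ → ℝ := fun s ↦ T s + s * K s with hLdef
  set V : ℝ → ℝ := fun s ↦ L s * (1 + ρ * s ^ 2) - ρ * s * G s with hVdef
  set M : ℝ → ℝ := fun s ↦
    s ^ (n - 1) * ((1 - s ^ 2) ^ (-(n * ρ)) * (1 + ρ * s ^ 2) ^ (q - 1)) with hMdef
  have hvd : ∀ s : ℝ, HasDerivAt (fun s : ℝ ↦ 1 + ρ * s ^ 2) (2 * ρ * s) s := fun s ↦ by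
    refine (((hasDerivAt_pow 2 s).const_mul ρ).const_add 1).congr_deriv ?_
    push_cast
    ring
  have hwd : ∀ s : ℝ, HasDerivAt (fun s : ℝ ↦ 1 - s ^ 2) (-(2 * s)) s := fun s ↦ by
    refine ((hasDerivAt_pow 2 s).const_sub 1).congr_deriv ?_
    push_cast
    ring
  have hMd : ∀ s ∈ Set.Ico (0 : ℝ) 1, DifferentiableAt ℝ M s ∧ (0 < s → deriv M s =
      M s * ((n - 1) / s + 2 * (n * ρ) * s / (1 - s ^ 2) +
        (q - 1) * (2 * ρ * s) / (1 + ρ * s ^ 2))) := by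
    intro s hs
    have h := (hasDerivAt_pow (n - 1) s).mul
      (((hwd s).rpow_const (p := -(n * ρ)) (.inl (hw s hs).ne')).mul
        ((hvd s).rpow_const (p := q - 1) (.inl (hv s).ne')))
    refine ⟨h.differentiableAt, fun h0 ↦ ?_⟩
    rw [show deriv M s = _ from h.deriv]
    have hv' := (hv s).ne'
    have hw' := (hw s hs).ne'
    have e1 : ((n - 1 : ℕ) : ℝ) = n - 1 := by
      rw [Nat.cast_sub (by omega)]
      simp
    have e2 : s ^ (n - 1) = s ^ (n - 1 - 1) * s := by
      rw [← pow_succ]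
      congr 1
      omega
    simp only [Pi.mul_apply, hMdef]
    rw [Real.rpow_sub_one hw', Real.rpow_sub_one hv' (q - 1), e1, e2]
    generalize (1 - s ^ 2) ^ (-(n * ρ)) = a
    generalize (1 + ρ * s ^ 2) ^ (q - 1) = b
    field_simp
    ring
  have hVd : ∀ s ∈ Set.Ico (0 : ℝ) 1, DifferentiableAt ℝ V s ∧ (0 < s → deriv V s =
      2 * (1 - q) * ρ * (1 + ρ) * s ^ 2 * G s / ((1 + ρ * s ^ 2) * (1 - s ^ 2)) -
      V s * ((n - 1) / s + 2 * (n * ρ) * s / (1 - s ^ 2) +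
        (q - 1) * (2 * ρ * s) / (1 + ρ * s ^ 2))) := by
    intro s hs
    obtain ⟨D, hD, hsD⟩ := hL s hs
    have h := (hD.mul (hvd s)).sub (((hasDerivAt_id s).const_mul ρ).mul (hG s hs))
    refine ⟨h.differentiableAt, fun h0 ↦ ?_⟩
    rw [show deriv V s = _ from h.deriv]
    have hv' := (hv s).ne'
    have hw' := (hw s hs).ne'
    have hD' : D = ((2 * q - 1) * s * K s - (n - 1) * T s) / s := by
      rw [← hsD]
      field_simp
    simp only [id, hVdef, hLdef, hD', hGKT s ⟨h0, hs.2⟩]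
    have hq' : q = (n * ρ - n + 2) / 2 := by linarith
    rw [hq']
    field_simp
    ring
  have hMV : MonotoneOn (fun s ↦ M s * V s) (Set.Ico 0 1) := by
    refine monotoneOn_of_deriv_nonneg (convex_Ico 0 1)
      (fun s hs ↦ ((hMd s hs).1.mul (hVd s hs).1).continuousAt.continuousWithinAt) ?_ ?_
    · rw [interior_Ico]
      exact fun s hs ↦ ((hMd s (Set.Ioo_subset_Ico_self hs)).1.mul
        (hVd s (Set.Ioo_subset_Ico_self hs)).1).differentiableWithinAt
    · rw [interior_Ico]
      intro s hs
      have hs' := Set.Ioo_subset_Ico_self hs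
      rw [deriv_fun_mul (hMd s hs').1 (hVd s hs').1, (hMd s hs').2 hs.1, (hVd s hs').2 hs.1]
      have hM0 : 0 ≤ M s := by
        have h1 := hs.1
        have h2 := hw s hs'
        have h3 := hv s
        simp only [hMdef]
        positivity
      have hnn : 0 ≤ 2 * (1 - q) * ρ * (1 + ρ) * s ^ 2 * G s /
          ((1 + ρ * s ^ 2) * (1 - s ^ 2)) := by
        have h1 := sub_nonneg.2 hq.2
        have h2 := hw s hs'
        have h3 := hGnn s hs
        positivity
      nlinarith [mul_nonneg hM0 hnn]
  have hVnn : ∀ s ∈ Set.Ioo (0 : ℝ) 1, 0 ≤ V s := by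
    intro s hs
    have h := hMV (by simp) (Set.Ioo_subset_Ico_self hs) hs.1.le
    have hM0 : 0 < M s := by
      have h1 := hs.1
      have h2 := hw s (Set.Ioo_subset_Ico_self hs)
      have h3 := hv s
      simp only [hMdef]
      positivity
    have hM00 : M 0 = 0 := by
      simp only [hMdef, zero_pow (show n - 1 ≠ 0 by omega), zero_mul]
    simp only [hM00, zero_mul] at h
    exact nonneg_of_mul_nonneg_right h hM0
  have hR : MonotoneOn (fun s ↦ G s * (1 + ρ * s ^ 2) ^ (-q)) (Set.Ico 0 1) := by
    have hd : ∀ s ∈ Set.Ico (0 : ℝ) 1, HasDerivAt (fun s ↦ G s * (1 + ρ * s ^ 2) ^ (-q))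
        (2 * q * (1 + ρ * s ^ 2) ^ (-q - 1) * V s) s := by
      intro s hs
      refine ((hG s hs).mul ((hvd s).rpow_const (p := -q) (.inl (hv s).ne'))).congr_deriv ?_
      rw [Real.rpow_sub_one (hv s).ne']
      have hv' := (hv s).ne'
      simp only [hVdef, hLdef]
      field_simp
      ring
    refine monotoneOn_of_deriv_nonneg (convex_Ico 0 1)
      (fun s hs ↦ (hd s hs).continuousAt.continuousWithinAt) ?_ ?_
    · rw [interior_Ico]
      exact fun s hs ↦
        (hd s (Set.Ioo_subset_Ico_self hs)).differentiableAt.differentiableWithinAt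
    · rw [interior_Ico]
      intro s hs
      rw [(hd s (Set.Ioo_subset_Ico_self hs)).deriv]
      have h1 := hVnn s hs
      have h2 := hq.1
      have h3 := hv s
      positivity
  have h := hR (by simp) hs hs.1
  simp only [hG0, ne_eq, OfNat.ofNat_ne_zero, not_false_eq_true, zero_pow, mul_zero, add_zero,
    Real.one_rpow, mul_one, Real.rpow_neg (hv s).le] at h
  rwa [← div_eq_mul_inv, one_le_div (Real.rpow_pos_of_pos (hv s) q)] at h

lemma rpow_le_sphericalMean {n : ℕ} (hn : 2 ≤ n) {q ρ : ℝ} (hq : q ∈ Set.Ioc (0 : ℝ) 1)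
    (hρ : n * ρ = 2 * q + n - 2) {u : EuclideanSpace ℝ (Fin n)} (hu : ‖u‖ = 1) {s : ℝ}
    (hs : s ∈ Set.Icc (0 : ℝ) 1) : (1 + ρ * s ^ 2) ^ q ≤ sphericalMean u q s := by
  have hsub : ∀ {s : ℝ}, s ∈ Set.Ico (0 : ℝ) 1 → s ∈ Set.Ioo (-1 : ℝ) 1 :=
    fun h ↦ ⟨by linarith [h.1], h.2⟩
  have hIco : ∀ s ∈ Set.Ico (0 : ℝ) 1, (1 + ρ * s ^ 2) ^ q ≤ sphericalMean u q s :=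
    fun s hs ↦ rpow_le_of_spherical_ode hn hq hρ (sphericalMean_zero (by omega) q)
      (fun s hs ↦ sphericalMean_nonneg hu (hsub (Set.Ioo_subset_Ico_self hs)) q)
      (fun s hs ↦ hasDerivAt_sphericalMean hu (hsub hs) q)
      (fun s hs ↦ exists_hasDerivAt_sphericalMoment_add hu (hsub hs) q)
      (fun s hs ↦ sphericalMean_eq hu (hsub (Set.Ioo_subset_Ico_self hs)) q) hs
  rw [← closure_Ico zero_ne_one] at hs
  exact le_on_closure hIco
    (Continuous.rpow_const (by fun_prop) fun _ ↦ .inr hq.1.le).continuousOn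
    (continuous_sphericalMean hq.1.le).continuousOn hs

lemma rpow_le_integral_of_le {n : ℕ} (hn : 2 ≤ n) {q ρ : ℝ} (hq : q ∈ Set.Ioc (0 : ℝ) 1)
    (hρ : n * ρ = 2 * q + n - 2) {u : EuclideanSpace ℝ (Fin n)} (hu : ‖u‖ = 1) {A B : ℝ}
    (hB : 0 ≤ B) (hBA : B ≤ A) :
    (A ^ 2 + ρ * B ^ 2) ^ q ≤ ∫ y : sphere (0 : EuclideanSpace ℝ (Fin n)) 1,
      (A ^ 2 + 2 * A * B * ⟪u, y⟫ + B ^ 2) ^ q ∂(sphereHaar n) := by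
  rcases (hB.trans hBA).eq_or_lt with rfl | hA
  · obtain rfl : B = 0 := le_antisymm hBA hB
    simp [Real.zero_rpow hq.1.ne']
  · have h := rpow_le_sphericalMean hn hq hρ hu (s := B / A)
      ⟨div_nonneg hB hA.le, (div_le_one hA).2 hBA⟩
    have h' := mul_le_mul_of_nonneg_left h (Real.rpow_nonneg (sq_nonneg A) q)
    rw [sphericalMean, ← integral_const_mul] at h'
    have hn' : (2 : ℝ) ≤ n := by exact_mod_cast hn
    have hρ0 : 0 < ρ := by
      refine pos_of_mul_pos_right (a := (n : ℝ)) ?_ (by positivity)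
      linarith [hq.1]
    refine le_of_eq_of_le ?_ (h'.trans_eq ?_)
    · rw [← Real.mul_rpow (by positivity) (by positivity)]
      congr 1
      field_simp
    · congr 1 with y
      obtain ⟨h1, h2⟩ := inner_sphere_mem_Icc hu y
      have hs : 0 ≤ B / A := div_nonneg hB hA.le
      rw [← Real.mul_rpow (by positivity)]
      · congr 1
        field_simp
      · nlinarith [sq_nonneg (B / A - 1)]

/-- Means of `‖x + a y‖ ^ (2 q)` over the unit sphere, for `‖x‖ = A` and `|a| = B`. -/
lemma rpow_le_integral {n : ℕ} (hn : 2 ≤ n) {q ρ : ℝ} (hq : q ∈ Set.Ioc (0 : ℝ) 1)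
    (hρ : n * ρ = 2 * q + n - 2) {u : EuclideanSpace ℝ (Fin n)} (hu : ‖u‖ = 1) {A B : ℝ}
    (hA : 0 ≤ A) (hB : 0 ≤ B) :
    (A ^ 2 + ρ * B ^ 2) ^ q ≤ ∫ y : sphere (0 : EuclideanSpace ℝ (Fin n)) 1,
      (A ^ 2 + 2 * A * B * ⟪u, y⟫ + B ^ 2) ^ q ∂(sphereHaar n) := by
  rcases le_total B A with h | h
  · exact rpow_le_integral_of_le hn hq hρ hu hB h
  · have hn' : (2 : ℝ) ≤ n := by exact_mod_cast hn
    have hρ0 : 0 < ρ := by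
      refine pos_of_mul_pos_right (a := (n : ℝ)) ?_ (by positivity)
      linarith [hq.1]
    have hρ1 : ρ ≤ 1 := by
      refine le_of_mul_le_mul_left (a := (n : ℝ)) ?_ (by positivity)
      linarith [hq.2]
    calc (A ^ 2 + ρ * B ^ 2) ^ q ≤ (B ^ 2 + ρ * A ^ 2) ^ q := by
          refine Real.rpow_le_rpow (by positivity) ?_ hq.1.le
          nlinarith [pow_le_pow_left₀ hA h 2]
      _ ≤ _ := rpow_le_integral_of_le hn hq hρ hu hA h
      _ = _ := by
        congr 1 with y
        congr 1
        ring

lemma exists_unit_norm_add_smul_sq {n : ℕ} (hn : n ≠ 0) (x : EuclideanSpace ℝ (Fin n)) (a : ℝ) :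
    ∃ u : EuclideanSpace ℝ (Fin n), ‖u‖ = 1 ∧
      ∀ y : sphere (0 : EuclideanSpace ℝ (Fin n)) 1,
        ‖x + a • (y : EuclideanSpace ℝ (Fin n))‖ ^ 2 =
          ‖x‖ ^ 2 + 2 * ‖x‖ * |a| * ⟪u, y⟫ + |a| ^ 2 := by
  have hexp : ∀ y : sphere (0 : EuclideanSpace ℝ (Fin n)) 1,
      ‖x + a • (y : EuclideanSpace ℝ (Fin n))‖ ^ 2 = ‖x‖ ^ 2 + 2 * (a * ⟪x, y⟫) + |a| ^ 2 := by
    intro y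
    rw [norm_add_sq_real, real_inner_smul_right, norm_smul, norm_eq_of_mem_sphere y, mul_one,
      Real.norm_eq_abs]
  obtain ⟨u, hu, hxu⟩ : ∃ u : EuclideanSpace ℝ (Fin n), ‖u‖ = 1 ∧ x = ‖x‖ • u := by
    rcases eq_or_ne x 0 with rfl | hx
    · exact ⟨EuclideanSpace.single ⟨0, Nat.pos_of_ne_zero hn⟩ 1, by simp, by simp⟩
    · have hx' := norm_ne_zero_iff.2 hx
      exact ⟨‖x‖⁻¹ • x, by simp [norm_smul, hx'], by simp [smul_smul, hx']⟩
  have hin : ∀ y : EuclideanSpace ℝ (Fin n), ⟪x, y⟫ = ‖x‖ * ⟪u, y⟫ := fun y ↦ by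
    conv_lhs => rw [hxu, real_inner_smul_left]
  rcases le_total 0 a with ha | ha
  · refine ⟨u, hu, fun y ↦ ?_⟩
    rw [hexp, abs_of_nonneg ha, hin]
    ring
  · refine ⟨-u, by simpa using hu, fun y ↦ ?_⟩
    rw [hexp, abs_of_nonpos ha, hin, inner_neg_left]
    ring

lemma integral_inner_sphereHaar {n : ℕ} (x : EuclideanSpace ℝ (Fin n)) :
    ∫ y : sphere (0 : EuclideanSpace ℝ (Fin n)) 1, ⟪x, y⟫ ∂(sphereHaar n) = 0 := by
  have h := integral_sphereHaar_comp_isometry (LinearIsometryEquiv.neg ℝ) (fun y ↦ ⟪x, y⟫)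
  simp only [LinearIsometryEquiv.coe_neg, inner_neg_right, integral_neg] at h
  linarith

lemma integral_norm_add_smul_sq {n : ℕ} (hn : n ≠ 0) (x : EuclideanSpace ℝ (Fin n)) (a : ℝ) :
    ∫ y : sphere (0 : EuclideanSpace ℝ (Fin n)) 1,
      ‖x + a • (y : EuclideanSpace ℝ (Fin n))‖ ^ 2 ∂(sphereHaar n) = ‖x‖ ^ 2 + a ^ 2 := by
  have := isProbabilityMeasure_sphereHaar hn
  obtain ⟨u, -, h⟩ := exists_unit_norm_add_smul_sq hn x a
  simp_rw [h]
  rw [integral_add, integral_add, integral_const_mul, integral_inner_sphereHaar]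
  · simp
  all_goals exact integrable_sphereHaar (by fun_prop)

theorem stmt_19 (n : ℕ) (hn : 2 ≤ n) (p : ℝ) (hp : p ∈ Set.Ioc (0 : ℝ) 2) (r : ℝ)
    (hr : r ^ 2 ≤ (p + (n : ℝ) - 2) / n)
    (x : EuclideanSpace ℝ (Fin n)) (a : ℝ) :
    (∫ y : sphere (0 : EuclideanSpace ℝ (Fin n)) 1,
        ‖x + (a * r) • (y : EuclideanSpace ℝ (Fin n))‖ ^ (2 : ℝ) ∂(sphereHaar n)) ^ ((1 : ℝ) / 2) ≤
      (∫ y : sphere (0 : EuclideanSpace ℝ (Fin n)) 1,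
        ‖x + a • (y : EuclideanSpace ℝ (Fin n))‖ ^ p ∂(sphereHaar n)) ^ (1 / p) := by

  have hn0 : n ≠ 0 := by omega
  have hq : p / 2 ∈ Set.Ioc (0 : ℝ) 1 := ⟨by linarith [hp.1], by linarith [hp.2]⟩
  obtain ⟨u, hu, hxa⟩ := exists_unit_norm_add_smul_sq hn0 x a
  have hpow : ∀ y : sphere (0 : EuclideanSpace ℝ (Fin n)) 1,
      ‖x + a • (y : EuclideanSpace ℝ (Fin n))‖ ^ p =
        (‖x‖ ^ 2 + 2 * ‖x‖ * |a| * ⟪u, y⟫ + |a| ^ 2) ^ (p / 2) := by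
    intro y
    rw [← hxa, ← Real.rpow_natCast_mul (norm_nonneg _)]
    congr 1
    push_cast
    ring
  have hmain := rpow_le_integral hn hq (ρ := (p + (n : ℝ) - 2) / n) (by field_simp) hu
    (norm_nonneg x) (abs_nonneg a)
  simp_rw [hpow, Real.rpow_two]
  rw [integral_norm_add_smul_sq hn0]
  have hexp : (1 : ℝ) / 2 = p / 2 * (1 / p) := by
    have := hp.1.ne'
    field_simp
  rw [hexp, Real.rpow_mul (by positivity)]
  refine Real.rpow_le_rpow (by positivity) (le_trans ?_ hmain) (one_div_nonneg.2 hp.1.le)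
  refine Real.rpow_le_rpow (by positivity) ?_ hq.1.le
  rw [sq_abs, mul_pow, mul_comm (a ^ 2)]
  gcongr
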